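/- arXiv:1005.0724 — 5 statements merged into one kernel-verified Lean document; each statement's English description precedes it below -/
import Mathlib

section
/- Let mu, mu' : Q_p^* -> C^* be unramified group homomorphisms and set alpha = mu(p)^{-1} * sqrt(p) and beta = mu'(p)^{-1} / sqrt(p) (complex numbers). Let v : G -> C be a function such that v(b*g) = mu(a) * mu'(d) * |a/d|^{1/2} * v(g) for every b = [[a,b0],[0,d]] in B and every g in G, such that v(g*k) = v(g) for every k in K and g in G, and such that v(1) = 1. Then for every integer r >= 0 and every k in K: if k lies in I_s \ I_{s+1} for some 0 <= s <= r-1 then v(k * gamma^r) = alpha^s * beta^{r-s}, and if k lies in I_r then v(k * gamma^r) = alpha^r. -/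
open Matrix

noncomputable section

variable (p : ℕ) [Fact p.Prime]

/-- The underlying matrix of an element of `GL₂(ℚ_p)`. -/
def mat (g : GL (Fin 2) ℚ_[p]) : Matrix (Fin 2) (Fin 2) ℚ_[p] := g

/-- Membership in `K = GL₂(ℤ_p)`: all entries are `p`-adic integers and the
determinant is a unit of `ℤ_p`. -/
def inK (g : GL (Fin 2) ℚ_[p]) : Prop :=
  (∀ i j, ‖mat p g i j‖ ≤ 1) ∧ ‖(mat p g).det‖ = 1

/-- Membership in the Iwahori subgroup `I_n` of `K`: for `n = 0`, `I_0 = K`;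
for `n ≥ 1`, the diagonal entries are units of `ℤ_p` and the lower left entry
lies in `p^n ℤ_p`. -/
def inI (n : ℕ) (g : GL (Fin 2) ℚ_[p]) : Prop :=
  inK p g ∧ (n = 0 ∨
    (‖mat p g 0 0‖ = 1 ∧ ‖mat p g 1 1‖ = 1 ∧ ‖mat p g 1 0‖ ≤ (p : ℝ) ^ (-(n : ℤ))))

/-- `p` as a unit of `ℚ_p`. -/
def pu : ℚ_[p]ˣ :=
  Units.mk0 (p : ℚ_[p]) (by exact_mod_cast (Fact.out : p.Prime).ne_zero)

/-- The element `γ = diag(p⁻¹, 1)` of `GL₂(ℚ_p)`. -/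
def gamma : GL (Fin 2) ℚ_[p] :=
  Matrix.GeneralLinearGroup.mkOfDetNeZero !![(p : ℚ_[p])⁻¹, 0; 0, 1] (by
    have hp : (p : ℚ_[p]) ≠ 0 := by exact_mod_cast (Fact.out : p.Prime).ne_zero
    simp [Matrix.det_fin_two_of, hp])

/-- A character of `ℚ_p^×` is unramified if it is trivial on `ℤ_p^×`. -/
def Unramified (μ : ℚ_[p]ˣ →* ℂˣ) : Prop :=
  ∀ u : ℚ_[p]ˣ, ‖(u : ℚ_[p])‖ = 1 → μ u = 1

/-! A vector `v` of the principal series fixed by `K` is determined by its value at `1` and can be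
evaluated at any `g` through the Iwasawa decomposition: if `(c, d)` is the bottom row of `g`, a
column operation in `K` makes `g` upper triangular with lower right entry of norm
`max ‖c‖ ‖d‖`, and `‖det g‖` then gives the norm of the upper left entry. Hence
`v g = α ^ m * β ^ n * v 1` with `p ^ n = max ‖c‖ ‖d‖` and `p ^ (m + n) = ‖det g‖`. For
`g = k * γ ^ r` this maximum is `max (‖c‖ * p ^ r) ‖d‖`, where now `(c, d)` is the bottom row of
`k ∈ K`, and `I_s` is cut out of `K` by `‖c‖ ≤ p ^ (-s)`. -/

theorem sqrt_zpow {x : ℝ} (hx : 0 ≤ x) (n : ℤ) : √(x ^ n) = √x ^ n := by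
  rw [Real.sqrt_eq_iff_mul_self_eq (zpow_nonneg hx n) (zpow_nonneg (Real.sqrt_nonneg x) n),
    ← mul_zpow, Real.mul_self_sqrt hx]

section NormedField

variable {F : Type*} [NormedField F]

theorem exists_specialLinearGroup_mul_upperTriangular (A : Matrix (Fin 2) (Fin 2) F) :
    ∃ k : SpecialLinearGroup (Fin 2) F, (∀ i j, ‖k i j‖ ≤ 1) ∧
      (A * k) 1 0 = 0 ∧ ‖(A * k) 1 1‖ = max ‖A 1 0‖ ‖A 1 1‖ := by
  have hquot {x y : F} (h : ‖x‖ ≤ ‖y‖) : ‖x / y‖ ≤ 1 := by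
    rw [norm_div]
    exact div_le_one_of_le₀ h (norm_nonneg _)
  have hcancel {x y : F} (h : ‖x‖ ≤ ‖y‖) : y * (x / y) = x :=
    mul_div_cancel_of_imp' fun hy ↦ by simpa [hy] using h
  rcases le_total ‖A 1 0‖ ‖A 1 1‖ with h | h
  · refine ⟨⟨!![1, 0; -(A 1 0 / A 1 1), 1], by simp⟩, ?_, ?_, ?_⟩
    · simpa [Fin.forall_fin_two] using hquot h
    · simp [mul_apply, hcancel h]
    · simp [mul_apply, h]
  · refine ⟨⟨!![-(A 1 1 / A 1 0), -1; 1, 0], by simp⟩, ?_, ?_, ?_⟩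
    · simpa [Fin.forall_fin_two] using hquot h
    · simp [mul_apply, hcancel h]
    · simp [mul_apply, h]

variable [IsUltrametricDist F] {A : Matrix (Fin 2) (Fin 2) F}

theorem norm_diag_eq_one_of_norm_lowerLeft_lt_one (hA : ∀ i j, ‖A i j‖ ≤ 1)
    (hdet : ‖A.det‖ = 1) (hc : ‖A 1 0‖ < 1) : ‖A 0 0‖ = 1 ∧ ‖A 1 1‖ = 1 := by
  have hbc : ‖A 0 1 * A 1 0‖ < 1 := by
    rw [norm_mul]
    exact mul_lt_one_of_nonneg_of_lt_one_right (hA 0 1) (norm_nonneg _) hc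
  have hmax : 1 ≤ max ‖A 0 0 * A 1 1‖ ‖A 0 1 * A 1 0‖ := by
    rw [← hdet, det_fin_two, sub_eq_add_neg, ← norm_neg (A 0 1 * A 1 0)]
    exact IsUltrametricDist.norm_add_le_max _ _
  have had : 1 ≤ ‖A 0 0‖ * ‖A 1 1‖ := by
    rw [← norm_mul]
    exact (le_max_iff.1 hmax).resolve_right hbc.not_ge
  exact ⟨(hA 0 0).antisymm (had.trans (mul_le_of_le_one_right (norm_nonneg _) (hA 1 1))),
    (hA 1 1).antisymm (had.trans (mul_le_of_le_one_left (norm_nonneg _) (hA 0 0)))⟩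

theorem max_norm_bottomRow_eq_one (hA : ∀ i j, ‖A i j‖ ≤ 1) (hdet : ‖A.det‖ = 1) :
    max ‖A 1 0‖ ‖A 1 1‖ = 1 := by
  rcases (hA 1 0).lt_or_eq with hc | hc
  · rw [(norm_diag_eq_one_of_norm_lowerLeft_lt_one hA hdet hc).2, max_eq_right hc.le]
  · rw [hc, max_eq_left (hA 1 1)]

end NormedField

theorem inI_iff_norm_lowerLeft_le (n : ℕ) (k : GL (Fin 2) ℚ_[p]) :
    inI p n k ↔ inK p k ∧ ‖mat p k 1 0‖ ≤ (p : ℝ) ^ (-(n : ℤ)) := by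
  refine and_congr_right fun hk ↦ ?_
  rcases n.eq_zero_or_pos with rfl | hn
  · simpa using hk.1 1 0
  · have hp : (1 : ℝ) < p := mod_cast (Fact.out : p.Prime).one_lt
    have hlt : (p : ℝ) ^ (-(n : ℤ)) < 1 := zpow_lt_one_of_neg₀ hp (by lia)
    refine ⟨fun h ↦ (h.resolve_left hn.ne').2.2, fun hc ↦ Or.inr ?_⟩
    have hdiag := norm_diag_eq_one_of_norm_lowerLeft_lt_one hk.1 hk.2 (hc.trans_lt hlt)
    exact ⟨hdiag.1, hdiag.2, hc⟩

theorem norm_lowerLeft_of_inI_of_not_inI_succ {s : ℕ} {k : GL (Fin 2) ℚ_[p]} (h : inI p s k)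
    (h' : ¬ inI p (s + 1) k) : ‖mat p k 1 0‖ = (p : ℝ) ^ (-(s : ℤ)) := by
  rw [inI_iff_norm_lowerLeft_le] at h h'
  refine h.2.antisymm (not_lt.1 fun hlt ↦ h' ⟨h.1, ?_⟩)
  rw [Padic.norm_le_pow_iff_norm_lt_pow_add_one]
  simpa using hlt

theorem mat_mul_gamma_pow (g : GL (Fin 2) ℚ_[p]) (r : ℕ) :
    mat p (g * gamma p ^ r) = mat p g * diagonal ![(p : ℚ_[p])⁻¹ ^ r, 1] := by
  have hγ : mat p (gamma p) = diagonal ![(p : ℚ_[p])⁻¹, 1] := by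
    ext i j
    fin_cases i <;> fin_cases j <;> rfl
  have hpow : mat p (gamma p ^ r) = diagonal ![(p : ℚ_[p])⁻¹ ^ r, 1] := by
    rw [mat, Units.val_pow_eq_pow_val]
    change mat p (gamma p) ^ r = _
    rw [hγ, diagonal_pow]
    congr 1
    ext i
    fin_cases i <;> simp
  rw [← hpow]
  rfl

section SphericalVector

variable {p}

theorem Unramified.apply_eq_zpow {μ : ℚ_[p]ˣ →* ℂˣ} (hμ : Unramified p μ) {a : ℚ_[p]ˣ} {n : ℤ}
    (ha : ‖(a : ℚ_[p])‖ = (p : ℝ) ^ n) : μ a = (μ (pu p))⁻¹ ^ n := by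
  have hp : (p : ℝ) ≠ 0 := mod_cast (Fact.out : p.Prime).ne_zero
  have hunit : μ (a * pu p ^ n) = 1 := hμ _ (by
    rw [Units.val_mul, Units.val_zpow_eq_zpow_val, norm_mul, norm_zpow, ha, pu, Units.val_mk0,
      Padic.norm_p, _root_.inv_zpow, mul_inv_cancel₀ (zpow_ne_zero n hp)])
  rw [map_mul, map_zpow] at hunit
  rw [_root_.inv_zpow, eq_inv_of_mul_eq_one_left hunit]

/-- A `K`-fixed vector of the normalized principal series `Ind_B^G (μ ⊗ μ')`, realized as a
function on `G` (without the condition that `v ≠ 0`). -/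
structure IsSphericalVector (μ μ' : ℚ_[p]ˣ →* ℂˣ) (v : GL (Fin 2) ℚ_[p] → ℂ) : Prop where
  map_borel_mul : ∀ (b g : GL (Fin 2) ℚ_[p]) (a d : ℚ_[p]ˣ),
    mat p b 1 0 = 0 → mat p b 0 0 = a → mat p b 1 1 = d →
      v (b * g) = (μ a : ℂ) * (μ' d : ℂ) * (√‖(a : ℚ_[p]) / (d : ℚ_[p])‖ : ℂ) * v g
  map_mul_of_inK : ∀ g k : GL (Fin 2) ℚ_[p], inK p k → v (g * k) = v g

namespace IsSphericalVector

variable {μ μ' : ℚ_[p]ˣ →* ℂˣ} {v : GL (Fin 2) ℚ_[p] → ℂ}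

theorem apply_of_upperTriangular (hv : IsSphericalVector μ μ' v) (hμ : Unramified p μ)
    (hμ' : Unramified p μ') {b : GL (Fin 2) ℚ_[p]} (hb : mat p b 1 0 = 0) {m n : ℤ}
    (ha : ‖mat p b 0 0‖ = (p : ℝ) ^ m) (hd : ‖mat p b 1 1‖ = (p : ℝ) ^ n) :
    v b = ((μ (pu p) : ℂ)⁻¹ * (√p : ℂ)) ^ m * ((μ' (pu p) : ℂ)⁻¹ / (√p : ℂ)) ^ n * v 1 := by
  have hp : (0 : ℝ) < p := mod_cast (Fact.out : p.Prime).pos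
  have ha0 : mat p b 0 0 ≠ 0 := norm_pos_iff.1 (ha ▸ zpow_pos hp m)
  have hd0 : mat p b 1 1 ≠ 0 := norm_pos_iff.1 (hd ▸ zpow_pos hp n)
  have hmod : √‖mat p b 0 0 / mat p b 1 1‖ = √p ^ m / √p ^ n := by
    rw [norm_div, ha, hd, Real.sqrt_div (zpow_nonneg hp.le m), sqrt_zpow hp.le, sqrt_zpow hp.le]
  have hvb := hv.map_borel_mul b 1 (Units.mk0 _ ha0) (Units.mk0 _ hd0) hb rfl rfl
  rw [mul_one, hμ.apply_eq_zpow ha, hμ'.apply_eq_zpow hd, Units.val_mk0, Units.val_mk0,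
    hmod] at hvb
  rw [hvb]
  push_cast
  rw [mul_zpow, div_zpow]
  ring

theorem apply_eq (hv : IsSphericalVector μ μ' v) (hμ : Unramified p μ) (hμ' : Unramified p μ')
    {g : GL (Fin 2) ℚ_[p]} {m n : ℤ}
    (hrow : max ‖mat p g 1 0‖ ‖mat p g 1 1‖ = (p : ℝ) ^ n)
    (hdet : ‖(mat p g).det‖ = (p : ℝ) ^ (m + n)) :
    v g = ((μ (pu p) : ℂ)⁻¹ * (√p : ℂ)) ^ m * ((μ' (pu p) : ℂ)⁻¹ / (√p : ℂ)) ^ n * v 1 := by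
  have hp : (p : ℝ) ≠ 0 := mod_cast (Fact.out : p.Prime).ne_zero
  obtain ⟨k, hk, hlower, hnorm⟩ := exists_specialLinearGroup_mul_upperTriangular (mat p g)
  have hK : inK p (k : GL (Fin 2) ℚ_[p]) := ⟨hk, by simp [mat]⟩
  have hd : ‖mat p (g * k) 1 1‖ = (p : ℝ) ^ n := hnorm.trans hrow
  have had : ‖mat p (g * k) 0 0‖ * ‖mat p (g * k) 1 1‖ = (p : ℝ) ^ (m + n) := by
    have hdiag : (mat p (g * k)).det = mat p (g * k) 0 0 * mat p (g * k) 1 1 := by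
      rw [det_fin_two, show mat p (g * k) 1 0 = 0 from hlower, mul_zero, sub_zero]
    have hmul : (mat p (g * k)).det = (mat p g).det := by simp [mat]
    rw [← norm_mul, ← hdiag, hmul, hdet]
  have ha : ‖mat p (g * k) 0 0‖ = (p : ℝ) ^ m := by
    rw [hd, zpow_add₀ hp] at had
    exact mul_right_cancel₀ (zpow_ne_zero n hp) had
  rw [← hv.map_mul_of_inK g k hK]
  exact hv.apply_of_upperTriangular hμ hμ' (b := g * k) hlower ha hd

theorem apply_mul_gamma_pow (hv : IsSphericalVector μ μ' v) (hμ : Unramified p μ)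
    (hμ' : Unramified p μ') {k : GL (Fin 2) ℚ_[p]} (hk : ‖(mat p k).det‖ = 1) {m n : ℕ}
    (hrow : max (‖mat p k 1 0‖ * (p : ℝ) ^ (m + n)) ‖mat p k 1 1‖ = (p : ℝ) ^ n) :
    v (k * gamma p ^ (m + n)) =
      ((μ (pu p) : ℂ)⁻¹ * (√p : ℂ)) ^ m * ((μ' (pu p) : ℂ)⁻¹ / (√p : ℂ)) ^ n * v 1 := by
  have hγ : ‖(p : ℚ_[p])⁻¹ ^ (m + n)‖ = (p : ℝ) ^ (m + n) := by
    rw [norm_pow, norm_inv, Padic.norm_p, inv_inv]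
  have hrow' : max ‖mat p (k * gamma p ^ (m + n)) 1 0‖ ‖mat p (k * gamma p ^ (m + n)) 1 1‖ =
      (p : ℝ) ^ (n : ℤ) := by
    simpa only [mat_mul_gamma_pow, mul_diagonal, cons_val_zero, cons_val_one, norm_mul, hγ,
      mul_one, norm_one, zpow_natCast] using hrow
  have hdet : ‖(mat p (k * gamma p ^ (m + n))).det‖ = (p : ℝ) ^ ((m : ℤ) + n) := by
    rw [mat_mul_gamma_pow, det_mul, det_diagonal, Fin.prod_univ_two, norm_mul, hk, one_mul,
      cons_val_zero, cons_val_one, cons_val_zero, mul_one, hγ, ← Nat.cast_add, zpow_natCast]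
  simpa using hv.apply_eq hμ hμ' hrow' hdet

end IsSphericalVector

end SphericalVector

/-- Lemma «calcul-NR», first part: values of the translates `γ^r · v` of the
(normalized) new vector `v` of the unramified principal series
`Ind_B^G (μ ⊗ μ')` at elements of `K`. -/
theorem stmt0 (μ μ' : ℚ_[p]ˣ →* ℂˣ)
    (hμ : Unramified p μ) (hμ' : Unramified p μ')
    (α β : ℂ)
    (hα : α = ((μ (pu p) : ℂ))⁻¹ * (Real.sqrt p : ℂ))
    (hβ : β = ((μ' (pu p) : ℂ))⁻¹ / (Real.sqrt p : ℂ))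
    (v : GL (Fin 2) ℚ_[p] → ℂ)
    (hvB : ∀ (b g : GL (Fin 2) ℚ_[p]) (a d : ℚ_[p]ˣ),
      mat p b 1 0 = 0 → mat p b 0 0 = a → mat p b 1 1 = d →
      v (b * g) = (μ a : ℂ) * (μ' d : ℂ) *
        (Real.sqrt ‖(a : ℚ_[p]) / (d : ℚ_[p])‖ : ℂ) * v g)
    (hvK : ∀ (g k : GL (Fin 2) ℚ_[p]), inK p k → v (g * k) = v g)
    (hv1 : v 1 = 1) :
    ∀ (r : ℕ) (k : GL (Fin 2) ℚ_[p]),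
      (∀ s : ℕ, s + 1 ≤ r → inI p s k → ¬ inI p (s + 1) k →
        v (k * gamma p ^ r) = α ^ s * β ^ (r - s)) ∧
      (inI p r k → v (k * gamma p ^ r) = α ^ r) := by
  intro r k
  subst hα hβ
  have hv : IsSphericalVector μ μ' v := ⟨hvB, hvK⟩
  have hp : (1 : ℝ) ≤ p := mod_cast (Fact.out : p.Prime).one_le
  have hp0 : (p : ℝ) ≠ 0 := (zero_lt_one.trans_le hp).ne'
  refine ⟨fun s hs h h' ↦ ?_, fun h ↦ ?_⟩
  · obtain ⟨t, rfl⟩ := Nat.exists_eq_add_of_le (Nat.le_of_succ_le hs)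
    have hc : ‖mat p k 1 0‖ * (p : ℝ) ^ (s + t) = (p : ℝ) ^ t := by
      rw [norm_lowerLeft_of_inI_of_not_inI_succ p h h', _root_.zpow_neg, zpow_natCast, pow_add,
        inv_mul_cancel_left₀ (pow_ne_zero s hp0)]
    have hrow : max (‖mat p k 1 0‖ * (p : ℝ) ^ (s + t)) ‖mat p k 1 1‖ = (p : ℝ) ^ t := by
      rw [hc, max_eq_left ((h.1.1 1 1).trans (one_le_pow₀ hp))]
    simpa [hv1] using hv.apply_mul_gamma_pow hμ hμ' h.1.2 hrow
  · obtain ⟨hK, hc⟩ := (inI_iff_norm_lowerLeft_le p r k).1 h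
    have hrow : max (‖mat p k 1 0‖ * (p : ℝ) ^ r) ‖mat p k 1 1‖ = 1 := by
      refine le_antisymm (max_le ?_ (hK.1 1 1)) ?_
      · rwa [_root_.zpow_neg, zpow_natCast, ← one_div, le_div_iff₀ (by positivity)] at hc
      · rw [← max_norm_bottomRow_eq_one hK.1 hK.2]
        exact max_le_max_right _ (le_mul_of_one_le_right (norm_nonneg _) (one_le_pow₀ hp))
    simpa [hv1] using hv.apply_mul_gamma_pow (m := r) (n := 0) hμ hμ' hK.2 (by simpa using hrow)
end
end

section
/- Let n >= 1 be an integer, let mu : Q_p^* -> C^* be an unramified group homomorphism and mu' : Q_p^* -> C^* any group homomorphism, and set alpha = mu(p)^{-1} * sqrt(p). Let v : G -> C be a function such that: (i) v(b*g) = mu(a) * mu'(d) * |a/d|^{1/2} * v(g) for every b = [[a,b0],[0,d]] in B and g in G; (ii) v(g*k) = mu(d) * mu'(d) * v(g) for every g in G and every k in I_n whose (2,2) entry is d; (iii) v(k) = 0 for every k in K \ I_n; (iv) v(1) = 1. Then for every integer r >= 0 and every k in K: v(k*gamma^r) = alpha^r * mu'(d) if k lies in I_{n+r} and has (2,2) entry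 d, and v(k*gamma^r) = 0 otherwise. Moreover, v(k*gamma^r) - alpha^{-1} * v(k*gamma^{r+1}) = alpha^r * mu'(d) if k lies in I_{n+r} \ I_{n+r+1} with (2,2) entry d, and equals 0 for all other k in K. -/
open Matrix

noncomputable section

variable (p : ℕ) [Fact p.Prime]

/-
A new vector `v` is known on all of `G`, not only on `B · K`. If `g` has bottom row `(c, d)`, then
`g = b * k` with `b ∈ B` and `k = [1, 0; c/d, 1]` when `|c| ≤ |d|`, or `k = [0, 1; 1, d/c]` when
`|d| < |c|`. Hence `v` vanishes at `g` unless `|c| ≤ ρ|d|`, `ρ` being the radius of the level, and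
there `v g = μ(det g / d) μ'(d) |det g / d²|^{1/2}`. Replacing `k ∈ K` by `k * diag(t⁻¹, 1)` only
replaces `(c, d)` by `(c/t, d)` and `det k` by `det k / t`, so the values at `k * γ ^ r` are read
off with `t = p ^ r`.
-/

section Field

variable {F : Type*} [Field F]

/-- The embedding `t ↦ diag(t, 1)` of `Fˣ` into `GL₂(F)`; the element `γ` is the image of `ϖ⁻¹`. -/
def diagFst : Fˣ →* GL (Fin 2) F where
  toFun t := .mkOfDetNeZero !![(t : F), 0; 0, 1] (by simp)
  map_one' := Units.ext (by simp [one_fin_two])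
  map_mul' s t := Units.ext (by simp)

/-- The upper triangular matrix `[a, b; 0, d]`, a general element of the Borel subgroup. -/
def upperTriangular (a d : Fˣ) (b : F) : GL (Fin 2) F :=
  .mkOfDetNeZero !![(a : F), b; 0, (d : F)] (by simp)

/-- The lower unipotent matrix `[1, 0; x, 1]`. -/
def lowerUnipotent (x : F) : GL (Fin 2) F :=
  .mkOfDetNeZero !![1, 0; x, 1] (by simp)

/-- The matrix `[0, 1; 1, x] = w * [1, x; 0, 1]`, representing a point of the big Bruhat cell
modulo the Borel subgroup. -/
def weylUnipotent (x : F) : GL (Fin 2) F :=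
  .mkOfDetNeZero !![0, 1; 1, x] (by simp)

lemma mul_diagFst_apply_one_zero (g : GL (Fin 2) F) (t : Fˣ) :
    (g * diagFst t) 1 0 = g 1 0 * t := by
  simp [diagFst, Matrix.mul_apply]

lemma mul_diagFst_apply_one_one (g : GL (Fin 2) F) (t : Fˣ) :
    (g * diagFst t) 1 1 = g 1 1 := by
  simp [diagFst, Matrix.mul_apply]

lemma det_diagFst (t : Fˣ) : GeneralLinearGroup.det (diagFst t) = t :=
  Units.ext (by simp [diagFst])

lemma eq_upperTriangular_mul_lowerUnipotent (g : GL (Fin 2) F) {d : Fˣ} (hd : g 1 1 = d) :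
    g = upperTriangular (GeneralLinearGroup.det g / d) d (g 0 1) *
      lowerUnipotent (g 1 0 / d) := by
  ext i j
  fin_cases i <;> fin_cases j <;>
    simp [upperTriangular, lowerUnipotent, det_fin_two, hd] <;> field_simp
  ring

lemma eq_upperTriangular_mul_weylUnipotent (g : GL (Fin 2) F) {c : Fˣ} (hc : g 1 0 = c) :
    g = upperTriangular (-GeneralLinearGroup.det g / c) c (g 0 0) *
      weylUnipotent (g 1 1 / c) := by
  ext i j
  fin_cases i <;> fin_cases j <;>
    simp [upperTriangular, weylUnipotent, det_fin_two, hc] <;> field_simp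
  ring

end Field

section NormedField

variable {F : Type*} [NormedField F]

/-- Membership in `GL₂(𝒪)`, where `𝒪` is the unit ball of `F`; this is `K` when `F = ℚ_p`. -/
def MemIntegralGL (g : GL (Fin 2) F) : Prop :=
  (∀ i j, ‖g i j‖ ≤ 1) ∧ ‖(g : Matrix (Fin 2) (Fin 2) F).det‖ = 1

/-- Membership in the subgroup of `GL₂(𝒪)` cut out by `|c| ≤ ρ` on the lower left entry `c`.
Levels are measured by the radius `ρ`: the subgroup `I_n` is the case `ρ = |ϖ| ^ n`. The
diagonal entries are automatically units when `ρ < 1`. -/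
def MemIwahori (ρ : ℝ) (g : GL (Fin 2) F) : Prop :=
  MemIntegralGL g ∧ ‖g 1 0‖ ≤ ρ

lemma MemIwahori.mono {ρ σ : ℝ} (h : ρ ≤ σ) {g : GL (Fin 2) F} (hg : MemIwahori ρ g) :
    MemIwahori σ g :=
  ⟨hg.1, hg.2.trans h⟩

lemma memIntegralGL_lowerUnipotent {x : F} (hx : ‖x‖ ≤ 1) : MemIntegralGL (lowerUnipotent x) := by
  simp [MemIntegralGL, lowerUnipotent, Fin.forall_fin_two, hx]

lemma memIntegralGL_weylUnipotent {x : F} (hx : ‖x‖ ≤ 1) : MemIntegralGL (weylUnipotent x) := by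
  simp [MemIntegralGL, weylUnipotent, Fin.forall_fin_two, hx]

lemma MemIntegralGL.norm_diag_eq_one [IsUltrametricDist F] {g : GL (Fin 2) F}
    (hg : MemIntegralGL g) (hc : ‖g 1 0‖ < 1) : ‖g 0 0‖ = 1 ∧ ‖g 1 1‖ = 1 := by
  have offdiag_lt : ‖g 0 1 * g 1 0‖ < 1 := by
    rw [norm_mul]
    exact mul_lt_one_of_nonneg_of_lt_one_right (hg.1 0 1) (norm_nonneg _) hc
  have diag_ge : 1 ≤ ‖g 0 0‖ * ‖g 1 1‖ := by
    by_contra! hlt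
    refine hg.2.not_lt ?_
    rw [← norm_mul] at hlt
    rw [det_fin_two, sub_eq_add_neg]
    exact (IsUltrametricDist.norm_add_le_max _ _).trans_lt
      (max_lt hlt ((norm_neg _).trans_lt offdiag_lt))
  constructor
  · exact (hg.1 0 0).antisymm
      (diag_ge.trans (mul_le_of_le_one_right (norm_nonneg _) (hg.1 1 1)))
  · exact (hg.1 1 1).antisymm
      (diag_ge.trans (mul_le_of_le_one_left (norm_nonneg _) (hg.1 0 0)))

/-- Membership in the space of the normalized induction `Ind_B^G (μ ⊗ μ')`, without any
smoothness condition. -/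
def IsInduced (μ μ' : Fˣ →* ℂˣ) (v : GL (Fin 2) F → ℂ) : Prop :=
  ∀ (b g : GL (Fin 2) F) (a d : Fˣ), b 1 0 = 0 → b 0 0 = a → b 1 1 = d →
    v (b * g) = (μ a : ℂ) * (μ' d : ℂ) * (√‖(a : F) / (d : F)‖ : ℂ) * v g

/-- The new vector of level `ρ` in `Ind_B^G (μ ⊗ μ')`, normalized by `v 1 = 1`; among the
elements of `GL₂(𝒪)` it is supported on the subgroup of level `ρ`. -/
structure IsNewVector (ρ : ℝ) (μ μ' : Fˣ →* ℂˣ) (v : GL (Fin 2) F → ℂ) : Prop where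
  isInduced : IsInduced μ μ' v
  map_mul_right : ∀ (g k : GL (Fin 2) F) (d : Fˣ), MemIwahori ρ k → k 1 1 = d →
    v (g * k) = (μ d : ℂ) * (μ' d : ℂ) * v g
  eq_zero_of_notMem : ∀ k : GL (Fin 2) F, MemIntegralGL k → ¬ MemIwahori ρ k → v k = 0
  apply_one : v 1 = 1

variable {ρ : ℝ} {μ μ' : Fˣ →* ℂˣ} {v : GL (Fin 2) F → ℂ}

lemma IsInduced.map_upperTriangular_mul (hv : IsInduced μ μ' v) (a d : Fˣ) (b : F)
    (g : GL (Fin 2) F) :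
    v (upperTriangular a d b * g) =
      (μ a : ℂ) * (μ' d : ℂ) * (√‖(a : F) / (d : F)‖ : ℂ) * v g :=
  hv _ _ _ _ (by simp [upperTriangular]) (by simp [upperTriangular]) (by simp [upperTriangular])

namespace IsNewVector

lemma apply_lowerUnipotent (hv : IsNewVector ρ μ μ' v) (hρ : ρ ≤ 1) {x : F} (hx : ‖x‖ ≤ ρ) :
    v (lowerUnipotent x) = 1 := by
  have mem : MemIwahori ρ (lowerUnipotent x) :=
    ⟨memIntegralGL_lowerUnipotent (hx.trans hρ), by simpa [lowerUnipotent] using hx⟩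
  simpa [hv.apply_one] using hv.map_mul_right 1 (lowerUnipotent x) 1 mem (by simp [lowerUnipotent])

lemma apply_eq (hv : IsNewVector ρ μ μ' v) (hρ : ρ ≤ 1) {g : GL (Fin 2) F} {d : Fˣ}
    (hd : g 1 1 = d) (hg : ‖g 1 0‖ ≤ ρ * ‖g 1 1‖) :
    v g = (μ (GeneralLinearGroup.det g / d) : ℂ) * (μ' d : ℂ) *
      (√‖((GeneralLinearGroup.det g / d : Fˣ) : F) / (d : F)‖ : ℂ) := by
  have hx : ‖g 1 0 / (d : F)‖ ≤ ρ := by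
    rwa [norm_div, div_le_iff₀ (norm_pos_iff.2 d.ne_zero), ← hd]
  conv_lhs => rw [eq_upperTriangular_mul_lowerUnipotent g hd]
  rw [hv.isInduced.map_upperTriangular_mul, hv.apply_lowerUnipotent hρ hx, mul_one]

lemma apply_eq_zero (hv : IsNewVector ρ μ μ' v) (hρ : ρ < 1) {g : GL (Fin 2) F}
    (hg : ρ * ‖g 1 1‖ < ‖g 1 0‖) : v g = 0 := by
  rcases le_or_gt ‖g 1 0‖ ‖g 1 1‖ with hcd | hdc
  · have hd : g 1 1 ≠ 0 := fun h ↦ by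
      simp only [h, norm_zero, mul_zero] at hg hcd
      exact hcd.not_gt hg
    have hx : ‖g 1 0 / g 1 1‖ ≤ 1 := by
      rw [norm_div]
      exact div_le_one_of_le₀ hcd (norm_nonneg _)
    have notMem : ¬ MemIwahori ρ (lowerUnipotent (g 1 0 / g 1 1)) := fun h ↦ by
      refine hg.not_ge ((div_le_iff₀ (norm_pos_iff.2 hd)).1 ?_)
      simpa [lowerUnipotent] using h.2
    rw [eq_upperTriangular_mul_lowerUnipotent g (d := Units.mk0 _ hd) rfl,
      hv.isInduced.map_upperTriangular_mul, Units.val_mk0,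
      hv.eq_zero_of_notMem _ (memIntegralGL_lowerUnipotent hx) notMem, mul_zero]
  · have hc : g 1 0 ≠ 0 := norm_pos_iff.1 ((norm_nonneg _).trans_lt hdc)
    have hx : ‖g 1 1 / g 1 0‖ ≤ 1 := by
      rw [norm_div]
      exact div_le_one_of_le₀ hdc.le (norm_nonneg _)
    have notMem : ¬ MemIwahori ρ (weylUnipotent (g 1 1 / g 1 0)) := fun h ↦
      hρ.not_ge (by simpa [weylUnipotent] using h.2)
    rw [eq_upperTriangular_mul_weylUnipotent g (c := Units.mk0 _ hc) rfl,
      hv.isInduced.map_upperTriangular_mul, Units.val_mk0,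
      hv.eq_zero_of_notMem _ (memIntegralGL_weylUnipotent hx) notMem, mul_zero]

lemma apply_mul_diagFst_inv [IsUltrametricDist F] (hv : IsNewVector ρ μ μ' v) (hρ : ρ ≤ 1)
    (hμ : ∀ u : Fˣ, ‖(u : F)‖ = 1 → μ u = 1) {t : Fˣ} (ht : ρ * ‖(t : F)‖ < 1)
    {k : GL (Fin 2) F} (hk : MemIwahori (ρ * ‖(t : F)‖) k) {d : Fˣ} (hd : k 1 1 = d) :
    v (k * diagFst t⁻¹) = (μ t⁻¹ : ℂ) * (√‖((t⁻¹ : Fˣ) : F)‖ : ℂ) * (μ' d : ℂ) := by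
  have norm_d : ‖(d : F)‖ = 1 := hd ▸ (hk.1.norm_diag_eq_one (hk.2.trans_lt ht)).2
  have norm_u : ‖((GeneralLinearGroup.det k / d : Fˣ) : F)‖ = 1 := by
    simpa [norm_d] using hk.1.2
  have row : ‖(k * diagFst t⁻¹) 1 0‖ ≤ ρ * ‖(k * diagFst t⁻¹) 1 1‖ := by
    rw [mul_diagFst_apply_one_zero, mul_diagFst_apply_one_one, hd, norm_d, mul_one, norm_mul,
      Units.val_inv_eq_inv_val, norm_inv]
    exact (mul_inv_le_iff₀ (norm_pos_iff.2 t.ne_zero)).2 hk.2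
  rw [hv.apply_eq hρ ((mul_diagFst_apply_one_one _ _).trans hd) row, map_mul, det_diagFst,
    mul_div_right_comm, map_mul, hμ _ norm_u, one_mul, norm_div, norm_d, div_one,
    Units.val_mul, norm_mul, norm_u, one_mul]
  ring

lemma apply_mul_diagFst_inv_eq_zero (hv : IsNewVector ρ μ μ' v) (hρ₀ : 0 ≤ ρ) (hρ : ρ < 1)
    (t : Fˣ) {k : GL (Fin 2) F} (hk : MemIntegralGL k) (hkt : ¬ MemIwahori (ρ * ‖(t : F)‖) k) :
    v (k * diagFst t⁻¹) = 0 := by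
  refine hv.apply_eq_zero hρ ?_
  have lt : ρ * ‖(t : F)‖ < ‖k 1 0‖ := lt_of_not_ge fun h ↦ hkt ⟨hk, h⟩
  rw [mul_diagFst_apply_one_zero, mul_diagFst_apply_one_one, norm_mul, Units.val_inv_eq_inv_val,
    norm_inv]
  calc ρ * ‖k 1 1‖ ≤ ρ := mul_le_of_le_one_right hρ₀ (hk.1 1 1)
    _ < ‖k 1 0‖ * ‖(t : F)‖⁻¹ := (lt_mul_inv_iff₀ (norm_pos_iff.2 t.ne_zero)).2 lt

end IsNewVector

variable {ϖ : Fˣ} {n : ℕ} {α : ℂ}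

lemma IsNewVector.apply_mul_diagFst_inv_pow [IsUltrametricDist F] (hϖ : ‖(ϖ : F)‖ < 1)
    (hn : 1 ≤ n) (hμ : ∀ u : Fˣ, ‖(u : F)‖ = 1 → μ u = 1)
    (hα : α = (μ ϖ : ℂ)⁻¹ * (√‖(ϖ : F)‖⁻¹ : ℂ)) (hv : IsNewVector (‖(ϖ : F)‖ ^ n) μ μ' v)
    (r : ℕ) {k : GL (Fin 2) F} (hk : MemIwahori (‖(ϖ : F)‖ ^ (n + r)) k) {d : Fˣ}
    (hd : k 1 1 = d) : v (k * diagFst ϖ⁻¹ ^ r) = α ^ r * (μ' d : ℂ) := by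
  have level : ‖(ϖ : F)‖ ^ (n + r) = ‖(ϖ : F)‖ ^ n * ‖((ϖ ^ r : Fˣ) : F)‖ := by
    rw [pow_add, Units.val_pow_eq_pow_val, norm_pow]
  have level_lt : ‖(ϖ : F)‖ ^ (n + r) < 1 := pow_lt_one₀ (norm_nonneg _) hϖ (by lia)
  have sqrt_pow : √(‖(ϖ : F)‖⁻¹ ^ r) = √‖(ϖ : F)‖⁻¹ ^ r := by
    rw [Real.sqrt_eq_rpow, Real.sqrt_eq_rpow, Real.rpow_pow_comm (by positivity)]
  rw [level] at hk level_lt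
  rw [← map_pow, inv_pow, hv.apply_mul_diagFst_inv (pow_le_one₀ (norm_nonneg _) hϖ.le) hμ
    level_lt hk hd, hα, ← inv_pow]
  simp only [map_pow, map_inv, Units.val_pow_eq_pow_val, Units.val_inv_eq_inv_val, norm_pow,
    norm_inv, sqrt_pow, mul_pow, Complex.ofReal_pow]

lemma IsNewVector.apply_mul_diagFst_inv_pow_eq_zero (hϖ : ‖(ϖ : F)‖ < 1) (hn : 1 ≤ n)
    (hv : IsNewVector (‖(ϖ : F)‖ ^ n) μ μ' v) (r : ℕ) {k : GL (Fin 2) F} (hk : MemIntegralGL k)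
    (hkr : ¬ MemIwahori (‖(ϖ : F)‖ ^ (n + r)) k) : v (k * diagFst ϖ⁻¹ ^ r) = 0 := by
  rw [← map_pow, inv_pow]
  refine hv.apply_mul_diagFst_inv_eq_zero (by positivity)
    (pow_lt_one₀ (norm_nonneg _) hϖ (by lia)) _ hk ?_
  rwa [Units.val_pow_eq_pow_val, norm_pow, ← pow_add]

theorem stmt2_general [IsUltrametricDist F] (hϖ : ‖(ϖ : F)‖ < 1) (hn : 1 ≤ n)
    (hμ : ∀ u : Fˣ, ‖(u : F)‖ = 1 → μ u = 1)
    (hα : α = (μ ϖ : ℂ)⁻¹ * (√‖(ϖ : F)‖⁻¹ : ℂ)) (hv : IsNewVector (‖(ϖ : F)‖ ^ n) μ μ' v)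
    (r : ℕ) (k : GL (Fin 2) F) :
    ((∀ d : Fˣ, MemIwahori (‖(ϖ : F)‖ ^ (n + r)) k → k 1 1 = d →
        v (k * diagFst ϖ⁻¹ ^ r) = α ^ r * (μ' d : ℂ)) ∧
      (MemIntegralGL k → ¬ MemIwahori (‖(ϖ : F)‖ ^ (n + r)) k →
        v (k * diagFst ϖ⁻¹ ^ r) = 0)) ∧
    ((∀ d : Fˣ, MemIwahori (‖(ϖ : F)‖ ^ (n + r)) k → ¬ MemIwahori (‖(ϖ : F)‖ ^ (n + r + 1)) k →
        k 1 1 = d →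
        v (k * diagFst ϖ⁻¹ ^ r) - α⁻¹ * v (k * diagFst ϖ⁻¹ ^ (r + 1)) = α ^ r * (μ' d : ℂ)) ∧
      (MemIntegralGL k →
        ¬ (MemIwahori (‖(ϖ : F)‖ ^ (n + r)) k ∧ ¬ MemIwahori (‖(ϖ : F)‖ ^ (n + r + 1)) k) →
        v (k * diagFst ϖ⁻¹ ^ r) - α⁻¹ * v (k * diagFst ϖ⁻¹ ^ (r + 1)) = 0)) := by
  have value := hv.apply_mul_diagFst_inv_pow hϖ hn hμ hα
  have vanish := hv.apply_mul_diagFst_inv_pow_eq_zero hϖ hn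
  refine ⟨⟨fun d hk hd ↦ value r hk hd, vanish r⟩, fun d hk hk' hd ↦ ?_, fun hk hk' ↦ ?_⟩
  · rw [value r hk hd, vanish (r + 1) hk.1 hk', mul_zero, sub_zero]
  by_cases hkr : MemIwahori (‖(ϖ : F)‖ ^ (n + r + 1)) k
  · have hk₀ : MemIwahori (‖(ϖ : F)‖ ^ (n + r)) k :=
      hkr.mono (pow_le_pow_of_le_one (norm_nonneg _) hϖ.le (Nat.le_succ _))
    have hd : k 1 1 ≠ 0 := norm_ne_zero_iff.1 <| by
      rw [(hk.norm_diag_eq_one (hkr.2.trans_lt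
        (pow_lt_one₀ (norm_nonneg _) hϖ (Nat.succ_ne_zero _)))).2]
      exact one_ne_zero
    have hα₀ : α ≠ 0 := by simp [hα]
    rw [value r hk₀ (d := Units.mk0 _ hd) rfl, value (r + 1) hkr (d := Units.mk0 _ hd) rfl]
    field_simp
    ring
  · have hk₀ : ¬ MemIwahori (‖(ϖ : F)‖ ^ (n + r)) k := fun h ↦ hk' ⟨h, hkr⟩
    rw [vanish r hk hk₀, vanish (r + 1) hk hkr, mul_zero, sub_zero]

end NormedField

lemma inI_iff (n : ℕ) (g : GL (Fin 2) ℚ_[p]) :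
    inI p n g ↔ MemIwahori (‖((pu p : ℚ_[p]ˣ) : ℚ_[p])‖ ^ n) g := by
  have radius : ‖((pu p : ℚ_[p]ˣ) : ℚ_[p])‖ ^ n = (p : ℝ) ^ (-(n : ℤ)) :=
    (norm_pow _ _).symm.trans (Padic.norm_p_pow n)
  rw [radius]
  constructor
  · rintro ⟨hK, rfl | ⟨-, -, hc⟩⟩
    · exact ⟨hK, (hK.1 1 0).trans_eq (by simp)⟩
    · exact ⟨hK, hc⟩
  · rintro ⟨hK, hc⟩
    refine ⟨hK, n.eq_zero_or_pos.imp_right fun hn ↦ ?_⟩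
    have hc_lt : ‖g 1 0‖ < 1 := (hc.trans_eq radius.symm).trans_lt
      (pow_lt_one₀ (norm_nonneg _) Padic.norm_p_lt_one hn.ne')
    have diag := MemIntegralGL.norm_diag_eq_one hK hc_lt
    exact ⟨diag.1, diag.2, hc⟩

lemma gamma_eq_diagFst : gamma p = diagFst (pu p)⁻¹ :=
  Units.ext (by simp [gamma, diagFst, pu])

/-- Lemma «calcul-SP1»: values of the translates `γ^r · v` of the new vector
`v` of the ramified principal series `Ind_B^G (μ ⊗ μ')` with `μ` unramified
and conductor `n = cond(μ') ≥ 1`. -/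
theorem stmt2 (n : ℕ) (hn : 1 ≤ n)
    (μ μ' : ℚ_[p]ˣ →* ℂˣ) (hμ : Unramified p μ)
    (α : ℂ) (hα : α = ((μ (pu p) : ℂ))⁻¹ * (Real.sqrt p : ℂ))
    (v : GL (Fin 2) ℚ_[p] → ℂ)
    (hvB : ∀ (b g : GL (Fin 2) ℚ_[p]) (a d : ℚ_[p]ˣ),
      mat p b 1 0 = 0 → mat p b 0 0 = a → mat p b 1 1 = d →
      v (b * g) = (μ a : ℂ) * (μ' d : ℂ) *
        (Real.sqrt ‖(a : ℚ_[p]) / (d : ℚ_[p])‖ : ℂ) * v g)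
    (hvI : ∀ (g k : GL (Fin 2) ℚ_[p]) (d : ℚ_[p]ˣ),
      inI p n k → mat p k 1 1 = d →
      v (g * k) = (μ d : ℂ) * (μ' d : ℂ) * v g)
    (hvsupp : ∀ k : GL (Fin 2) ℚ_[p], inK p k → ¬ inI p n k → v k = 0)
    (hv1 : v 1 = 1) :
    ∀ (r : ℕ) (k : GL (Fin 2) ℚ_[p]),
      -- values of `γ^r · v`
      ((∀ d : ℚ_[p]ˣ, inI p (n + r) k → mat p k 1 1 = d →
          v (k * gamma p ^ r) = α ^ r * (μ' d : ℂ)) ∧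
        (inK p k → ¬ inI p (n + r) k → v (k * gamma p ^ r) = 0)) ∧
      -- values of `γ^r · v - α⁻¹ γ^{r+1} · v`
      ((∀ d : ℚ_[p]ˣ, inI p (n + r) k → ¬ inI p (n + r + 1) k →
          mat p k 1 1 = d →
          v (k * gamma p ^ r) - α⁻¹ * v (k * gamma p ^ (r + 1)) =
            α ^ r * (μ' d : ℂ)) ∧
        (inK p k → ¬ (inI p (n + r) k ∧ ¬ inI p (n + r + 1) k) →
          v (k * gamma p ^ r) - α⁻¹ * v (k * gamma p ^ (r + 1)) = 0)) := by
  have norm_pu : ‖((pu p : ℚ_[p]ˣ) : ℚ_[p])‖ = (p : ℝ)⁻¹ := Padic.norm_p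
  simp only [inI_iff, gamma_eq_diagFst] at hvI hvsupp ⊢
  exact stmt2_general Padic.norm_p_lt_one hn hμ (by rw [hα, norm_pu, inv_inv])
    ⟨hvB, hvI, hvsupp, hv1⟩
end
end

section
/- Let eta : Q_p^* -> C^* be an unramified group homomorphism. Let v : G -> C be a function such that v(b*g) = eta(det(b)) * v(g) for every b in B and g in G, v(k) = 1 for every k in I, and v(k) = 0 for every k in K \ I. Then for every integer r >= 0 and every k in K: v(k*gamma^r) = eta(p)^{-r} if k lies in I_{r+1}, and v(k*gamma^r) = 0 if k lies in K \ I_{r+1}. -/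
open Matrix

noncomputable section

variable (p : ℕ) [Fact p.Prime]

/-
By the Iwasawa decomposition every `g` is `b * k` with `b` upper triangular, `k ∈ K` and
`det k = 1`. The bottom row `(c, d)` of `g` is then a nonzero multiple of that of `k`, and an
element of `K` with bottom row `(c, d)` lies in `I_1` exactly when `|c| < |d|`. Hence
`v g = η (det g)` when `|c| < |d|`, and `v g = 0` otherwise. Right multiplication by `γ ^ r`
multiplies `|c|` by `p ^ r` and fixes `d`, and an element of `K` lies in `I_{r+1}` exactly when
`p ^ r |c| < |d|`. Finally `η (det k) = 1` for `k` in `I_{r+1} ⊆ I_1`, since both sides equal `v k`.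
-/

theorem mul_bottom_row_cross {R : Type*} [CommRing R] (A B : Matrix (Fin 2) (Fin 2) R) :
    (A * B) 1 0 * B 1 1 - (A * B) 1 1 * B 1 0 = A 1 0 * B.det := by
  simp only [mul_apply, Fin.sum_univ_two, det_fin_two]
  ring

theorem mul_one_apply_of_one_zero_eq_zero {R : Type*} [NonUnitalNonAssocSemiring R]
    {A : Matrix (Fin 2) (Fin 2) R} (hA : A 1 0 = 0) (B : Matrix (Fin 2) (Fin 2) R) (j : Fin 2) :
    (A * B) 1 j = A 1 1 * B 1 j := by
  rw [mul_apply, Fin.sum_univ_two, hA, zero_mul, zero_add]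

theorem one_one_ne_zero_of_one_zero_eq_zero {R : Type*} [CommRing R] [Nontrivial R]
    {g : GL (Fin 2) R} (hg : g 1 0 = 0) : g 1 1 ≠ 0 := by
  intro h
  apply (GeneralLinearGroup.det g).ne_zero
  rw [GeneralLinearGroup.val_det_apply, det_fin_two, hg, h, mul_zero, mul_zero, sub_zero]

section NormedField

variable {F : Type*} [NormedField F]

theorem exists_integral_specialLinearGroup_bottom_row (c d : F) :
    ∃ k : SpecialLinearGroup (Fin 2) F, (∀ i j, ‖k i j‖ ≤ 1) ∧ c * k 1 1 = d * k 1 0 := by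
  rcases le_total ‖c‖ ‖d‖ with hle | hle
  · have c_eq_zero : d = 0 → c = 0 := by
      rintro rfl
      simpa using hle
    refine ⟨⟨!![1, 0; c / d, 1], by simp⟩, ?_, ?_⟩
    · simp [Fin.forall_fin_two, div_le_one_of_le₀ hle]
    · simp [mul_div_cancel_of_imp' c_eq_zero]
  · have d_eq_zero : c = 0 → d = 0 := by
      rintro rfl
      simpa using hle
    refine ⟨⟨!![0, -1; 1, d / c], by simp⟩, ?_, ?_⟩
    · simp [Fin.forall_fin_two, div_le_one_of_le₀ hle]
    · simp [mul_div_cancel_of_imp' d_eq_zero]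

theorem exists_eq_upperTriangular_mul_integral (g : GL (Fin 2) F) :
    ∃ (b : GL (Fin 2) F) (k : SpecialLinearGroup (Fin 2) F),
      b 1 0 = 0 ∧ (∀ i j, ‖k i j‖ ≤ 1) ∧ g = b * k := by
  obtain ⟨k, k_integral, hrow⟩ := exists_integral_specialLinearGroup_bottom_row (g 1 0) (g 1 1)
  have g_eq : g = g * (k : GL (Fin 2) F)⁻¹ * k := (inv_mul_cancel_right g _).symm
  refine ⟨g * (k : GL (Fin 2) F)⁻¹, k, ?_, k_integral, g_eq⟩
  have cross := mul_bottom_row_cross (g * (k : GL (Fin 2) F)⁻¹ : GL (Fin 2) F).1 k.1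
  have coe_g : (g * (k : GL (Fin 2) F)⁻¹ : GL (Fin 2) F).1 * k.1 = g.1 :=
    congrArg Units.val g_eq.symm
  rw [coe_g, k.2, mul_one] at cross
  exact cross.symm.trans (sub_eq_zero.2 hrow)

theorem norm_diag_eq_one_of_norm_one_zero_lt_one [IsUltrametricDist F]
    {A : Matrix (Fin 2) (Fin 2) F} (hA : ∀ i j, ‖A i j‖ ≤ 1) (hdet : ‖A.det‖ = 1)
    (hc : ‖A 1 0‖ < 1) : ‖A 0 0‖ = 1 ∧ ‖A 1 1‖ = 1 := by
  have antidiag_lt : ‖A 0 1 * A 1 0‖ < 1 := by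
    rw [norm_mul]
    exact mul_lt_one_of_nonneg_of_lt_one_right (hA 0 1) (norm_nonneg _) hc
  have one_le_diag : 1 ≤ ‖A 0 0‖ * ‖A 1 1‖ := by
    have h := IsUltrametricDist.norm_add_le_max (A 0 0 * A 1 1) (-(A 0 1 * A 1 0))
    rw [← sub_eq_add_neg, ← det_fin_two, hdet, norm_neg, norm_mul] at h
    exact (le_max_iff.1 h).resolve_right antidiag_lt.not_ge
  exact ⟨(hA 0 0).antisymm (one_le_diag.trans (mul_le_of_le_one_right (norm_nonneg _) (hA 1 1))),
    (hA 1 1).antisymm (one_le_diag.trans (mul_le_of_le_one_left (norm_nonneg _) (hA 0 0)))⟩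

end NormedField

section Padic

variable {p}

theorem padic_norm_le_zpow_neg_succ_iff (c : ℚ_[p]) (n : ℕ) :
    ‖c‖ ≤ (p : ℝ) ^ (-((n + 1 : ℕ) : ℤ)) ↔ ‖c‖ * (p : ℝ) ^ n < 1 := by
  have p_pos : (0 : ℝ) < p := mod_cast (Fact.out : p.Prime).pos
  have exponent : -((n + 1 : ℕ) : ℤ) + 1 = -(n : ℤ) := by
    push_cast
    ring
  rw [Padic.norm_le_pow_iff_norm_lt_pow_add_one, exponent, _root_.zpow_neg, zpow_natCast,
    ← one_div, lt_div_iff₀ (pow_pos p_pos n)]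

theorem inI_antitone : Antitone (inI p) := by
  rintro m n hmn k ⟨hK, rfl | ⟨ha, hd, hc⟩⟩
  · exact ⟨hK, .inl (Nat.le_zero.1 hmn)⟩
  · have one_le_p : (1 : ℝ) ≤ p := mod_cast (Fact.out : p.Prime).one_le
    exact ⟨hK, .inr ⟨ha, hd, hc.trans (zpow_le_zpow_right₀ one_le_p (by lia))⟩⟩

theorem inI_succ_iff {k : GL (Fin 2) ℚ_[p]} (hk : inK p k) (n : ℕ) :
    inI p (n + 1) k ↔ ‖k 1 0‖ * (p : ℝ) ^ n < ‖k 1 1‖ := by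
  constructor
  · rintro ⟨-, h | ⟨-, hd, hc⟩⟩
    · exact absurd h n.succ_ne_zero
    · exact ((padic_norm_le_zpow_neg_succ_iff _ n).1 hc).trans_eq hd.symm
  · intro h
    have one_le_p : (1 : ℝ) ≤ p := mod_cast (Fact.out : p.Prime).one_le
    have scaled_lt_one : ‖k 1 0‖ * (p : ℝ) ^ n < 1 := h.trans_le (hk.1 1 1)
    have c_lt_one : ‖k 1 0‖ < 1 :=
      (le_mul_of_one_le_right (norm_nonneg _) (one_le_pow₀ one_le_p)).trans_lt scaled_lt_one
    obtain ⟨ha, hd⟩ := norm_diag_eq_one_of_norm_one_zero_lt_one hk.1 hk.2 c_lt_one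
    exact ⟨hk, .inr ⟨ha, hd, (padic_norm_le_zpow_neg_succ_iff _ n).2 scaled_lt_one⟩⟩

theorem inI_one_iff {k : GL (Fin 2) ℚ_[p]} (hk : inK p k) :
    inI p 1 k ↔ ‖k 1 0‖ < ‖k 1 1‖ := by
  simpa using inI_succ_iff hk 0

theorem det_gamma : GeneralLinearGroup.det (gamma p) = (pu p)⁻¹ := by
  ext
  simp [gamma, pu]

theorem coe_gamma_pow (r : ℕ) :
    ((gamma p ^ r : GL (Fin 2) ℚ_[p]) : Matrix (Fin 2) (Fin 2) ℚ_[p]) =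
      diagonal ![(p : ℚ_[p])⁻¹ ^ r, 1] := by
  have coe_gamma : (gamma p : Matrix (Fin 2) (Fin 2) ℚ_[p]) = diagonal ![(p : ℚ_[p])⁻¹, 1] := by
    simp [gamma, diagonal_fin_two]
  rw [Units.val_pow_eq_pow_val, coe_gamma, diagonal_pow]
  congr 1
  ext i
  fin_cases i <;> simp

theorem norm_mul_gamma_pow_one_zero (g : GL (Fin 2) ℚ_[p]) (r : ℕ) :
    ‖(g * gamma p ^ r) 1 0‖ = ‖g 1 0‖ * (p : ℝ) ^ r := by
  rw [Units.val_mul, coe_gamma_pow, mul_diagonal]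
  simp

theorem mul_gamma_pow_one_one (g : GL (Fin 2) ℚ_[p]) (r : ℕ) :
    (g * gamma p ^ r) 1 1 = g 1 1 := by
  rw [Units.val_mul, coe_gamma_pow, mul_diagonal]
  simp

/-- `v` is the Iwahori vector `v^I` of the representation of `GL₂(ℚ_p)` induced from `η ∘ det` on
the Borel subgroup: it transforms by `η ∘ det` under left translation by upper triangular matrices,
and its restriction to `K` is the indicator function of `I`. Its values may lie in any monoid with
zero, which covers representations over coefficient rings other than `ℂ`. -/
structure IsIwahoriVector {M₀ : Type*} [MonoidWithZero M₀] (η : ℚ_[p]ˣ →* M₀ˣ)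
    (v : GL (Fin 2) ℚ_[p] → M₀) : Prop where
  map_borel_mul : ∀ b g : GL (Fin 2) ℚ_[p], mat p b 1 0 = 0 →
    v (b * g) = η (GeneralLinearGroup.det b) * v g
  eq_one_of_inI : ∀ k : GL (Fin 2) ℚ_[p], inI p 1 k → v k = 1
  eq_zero_of_not_inI : ∀ k : GL (Fin 2) ℚ_[p], inK p k → ¬ inI p 1 k → v k = 0

namespace IsIwahoriVector

variable {M₀ : Type*} [MonoidWithZero M₀] {η : ℚ_[p]ˣ →* M₀ˣ} {v : GL (Fin 2) ℚ_[p] → M₀}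

theorem apply_eq_ite (hv : IsIwahoriVector η v) (g : GL (Fin 2) ℚ_[p]) :
    v g = if ‖g 1 0‖ < ‖g 1 1‖ then (η (GeneralLinearGroup.det g) : M₀) else 0 := by
  obtain ⟨b, k, hb, k_integral, rfl⟩ := exists_eq_upperTriangular_mul_integral g
  have hk : inK p k := ⟨k_integral, by simp [mat]⟩
  have row_iff : ‖(b * k) 1 0‖ < ‖(b * k) 1 1‖ ↔ inI p 1 k := by
    rw [inI_one_iff hk, Units.val_mul, mul_one_apply_of_one_zero_eq_zero hb,
      mul_one_apply_of_one_zero_eq_zero hb, norm_mul, norm_mul,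
      mul_lt_mul_iff_right₀ (norm_pos_iff.2 (one_one_ne_zero_of_one_zero_eq_zero hb))]
  rw [hv.map_borel_mul b k hb, map_mul, SpecialLinearGroup.coeToGL_det, mul_one]
  split_ifs with h
  · rw [hv.eq_one_of_inI k (row_iff.1 h), mul_one]
  · rw [hv.eq_zero_of_not_inI k hk (row_iff.not.1 h), mul_zero]

theorem eta_det_eq_one (hv : IsIwahoriVector η v) {k : GL (Fin 2) ℚ_[p]} (hk : inI p 1 k) :
    (η (GeneralLinearGroup.det k) : M₀) = 1 := by
  have v_eq_det : v k = η (GeneralLinearGroup.det k) := by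
    rw [hv.apply_eq_ite, if_pos ((inI_one_iff hk.1).1 hk)]
  rw [← v_eq_det, hv.eq_one_of_inI k hk]

end IsIwahoriVector

theorem stmt5_general {M₀ : Type*} [MonoidWithZero M₀] {η : ℚ_[p]ˣ →* M₀ˣ}
    {v : GL (Fin 2) ℚ_[p] → M₀} (hv : IsIwahoriVector η v) (r : ℕ) (k : GL (Fin 2) ℚ_[p]) :
    (inI p (r + 1) k → v (k * gamma p ^ r) = ((η (pu p))⁻¹ : M₀ˣ) ^ r) ∧
      (inK p k → ¬ inI p (r + 1) k → v (k * gamma p ^ r) = 0) := by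
  have row_iff (hk : inK p k) : ‖(k * gamma p ^ r) 1 0‖ < ‖(k * gamma p ^ r) 1 1‖ ↔
      inI p (r + 1) k := by
    rw [norm_mul_gamma_pow_one_zero, mul_gamma_pow_one_one, inI_succ_iff hk]
  constructor
  · intro hI
    rw [hv.apply_eq_ite, if_pos ((row_iff hI.1).2 hI), map_mul, map_mul, Units.val_mul,
      hv.eta_det_eq_one (inI_antitone (Nat.le_add_left 1 r) k hI), one_mul, map_pow, det_gamma,
      map_pow, map_inv, Units.val_pow_eq_pow_val]
  · intro hK hI
    rw [hv.apply_eq_ite, if_neg ((row_iff hK).not.2 hI)]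

end Padic

/-- Lemma «calcul-SP-NR1»: values of the translates `γ^r · v^I` of the
`I`-supported vector `v^I` in `Ind_B^G ((η ∘ det) δ^{-1/2})`, for `η`
unramified. -/
theorem stmt5 (η : ℚ_[p]ˣ →* ℂˣ) (hη : Unramified p η)
    (v : GL (Fin 2) ℚ_[p] → ℂ)
    (hvB : ∀ (b g : GL (Fin 2) ℚ_[p]), mat p b 1 0 = 0 →
      v (b * g) = (η (Matrix.GeneralLinearGroup.det b) : ℂ) * v g)
    (hvI : ∀ k : GL (Fin 2) ℚ_[p], inI p 1 k → v k = 1)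
    (hvsupp : ∀ k : GL (Fin 2) ℚ_[p], inK p k → ¬ inI p 1 k → v k = 0) :
    ∀ (r : ℕ) (k : GL (Fin 2) ℚ_[p]),
      (inI p (r + 1) k → v (k * gamma p ^ r) = ((η (pu p) : ℂ))⁻¹ ^ r) ∧
      (inK p k → ¬ inI p (r + 1) k → v (k * gamma p ^ r) = 0) := by
  simpa using stmt5_general ⟨hvB, hvI, hvsupp⟩
end
end

section
/- For all integers s >= 1 and r >= 0, one has K ∩ (B * gamma^r * I_s * gamma^{-r}) = I_{s+r}, where B * gamma^r * I_s * gamma^{-r} denotes the set {b * gamma^r * k * gamma^{-r} : b in B, k in I_s}. -/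
open Matrix

noncomputable section

variable (p : ℕ) [Fact p.Prime]

/-!
Conjugation by `γ = diag(t⁻¹, 1)` multiplies the lower left entry by `t` and keeps the diagonal,
while left multiplication by `b ∈ B` scales the lower row by `b₁₁`. If `g = b (γ k γ⁻¹)` lies in
`K`, comparing the entries at `(1, 1)` shows that `b₁₁` is integral, which bounds `g₁₀`; as
`‖g₁₀‖ < 1` and `det g = g₀₀ g₁₁ - g₀₁ g₁₀` is a unit, the diagonal entries of `g` are units too.
Conversely, if `g₁₁` is a unit, some unipotent `u ∈ B` makes `u g` lower triangular, and conjugating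
`u g` by `γ⁻¹` divides its lower left entry by `t`.
-/

section CommRing

variable {R : Type*} [CommRing R]

/-- The matrix `diag(t⁻¹, 1)` as a homomorphism in `t`, so that `γ ^ r` is its value at `p ^ r`. -/
def diagInvOne : Rˣ →* GL (Fin 2) R where
  toFun t :=
    { val := !![((t⁻¹ : Rˣ) : R), 0; 0, 1]
      inv := !![(t : R), 0; 0, 1]
      val_inv := by simp [one_fin_two]
      inv_val := by simp [one_fin_two] }
  map_one' := by ext1; simp [one_fin_two]
  map_mul' t u := by ext1; simp [mul_comm]

lemma coe_diagInvOne (t : Rˣ) :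
    (diagInvOne t : Matrix (Fin 2) (Fin 2) R) = !![((t⁻¹ : Rˣ) : R), 0; 0, 1] :=
  rfl

lemma coe_diagInvOne_inv (t : Rˣ) :
    ((diagInvOne t)⁻¹ : GL (Fin 2) R).val = !![(t : R), 0; 0, 1] :=
  rfl

lemma coe_diagInvOne_conj (t : Rˣ) (k : GL (Fin 2) R) :
    (diagInvOne t * k * (diagInvOne t)⁻¹).val =
      !![k 0 0, (t⁻¹ : Rˣ) * k 0 1; t * k 1 0, k 1 1] := by
  rw [Units.val_mul, Units.val_mul, coe_diagInvOne, coe_diagInvOne_inv, eta_fin_two k.val]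
  simp [mul_comm, mul_left_comm]

lemma mul_apply_one_of_apply_one_zero_eq_zero {b : GL (Fin 2) R} (hb : b 1 0 = 0)
    (h : GL (Fin 2) R) (j : Fin 2) : (b * h) 1 j = b 1 1 * h 1 j := by
  simp [Matrix.mul_apply, Fin.sum_univ_two, hb]

end CommRing

lemma coe_upperRightHom_neg_div_mul {F : Type*} [Field F] {g : GL (Fin 2) F} (hg : g 1 1 ≠ 0) :
    (GeneralLinearGroup.upperRightHom (-(g 0 1 / g 1 1)) * g).val =
      !![g.val.det / g 1 1, 0; g 1 0, g 1 1] := by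
  have hdet : g 0 0 + -(g 0 1 / g 1 1 * g 1 0) = g.val.det / g 1 1 := by
    rw [det_fin_two]
    field_simp
    ring
  ext i j
  fin_cases i <;> fin_cases j <;> simp [Matrix.mul_apply, Fin.sum_univ_two, hdet, hg]

section Iwahori

variable {F : Type*} [NormedField F] {g k : GL (Fin 2) F} {ε : ℝ}

variable (F) in
/-- The group `GL₂(𝒪)` for `𝒪` the unit ball of `F`, as a subset of `GL₂(F)`. -/
def integralGL : Set (GL (Fin 2) F) :=
  {g | (∀ i j, ‖g i j‖ ≤ 1) ∧ ‖g.val.det‖ = 1}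

variable (F) in
/-- The Iwahori-type subset of `GL₂(𝒪)` cut out by unit diagonal entries and a lower left entry of
norm at most `ε`; for `F = ℚ_p`, the group `I_n` with `n ≥ 1` is the case `ε = p⁻ⁿ`. -/
def iwahori (ε : ℝ) : Set (GL (Fin 2) F) :=
  {g | g ∈ integralGL F ∧ ‖g 0 0‖ = 1 ∧ ‖g 1 1‖ = 1 ∧ ‖g 1 0‖ ≤ ε}

lemma mem_iwahori_of_coe_eq {a c d : F} (hk : k.val = !![a, 0; c, d]) (ha : ‖a‖ = 1)
    (hd : ‖d‖ = 1) (hc : ‖c‖ ≤ ε) (hε : ε ≤ 1) : k ∈ iwahori F ε := by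
  refine ⟨⟨?_, by simp [hk, ha, hd]⟩, by simp [hk, ha], by simp [hk, hd], by simpa [hk] using hc⟩
  simp [Fin.forall_fin_two, hk, ha, hd, hc.trans hε]

lemma exists_mem_iwahori_of_mem_iwahori_mul {t : Fˣ} (hε : ε ≤ 1)
    (hg : g ∈ iwahori F (ε * ‖(t : F)‖)) :
    ∃ b k : GL (Fin 2) F, b 1 0 = 0 ∧ k ∈ iwahori F ε ∧
      g = b * diagInvOne t * k * (diagInvOne t)⁻¹ := by
  obtain ⟨⟨-, hdet⟩, -, hd, hc⟩ := hg
  have hd0 : g 1 1 ≠ 0 := norm_ne_zero_iff.mp (hd ▸ one_ne_zero)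
  set u : GL (Fin 2) F := GeneralLinearGroup.upperRightHom (-(g 0 1 / g 1 1)) with hu
  have hlower : (u * g).val = !![g.val.det / g 1 1, 0; g 1 0, g 1 1] :=
    coe_upperRightHom_neg_div_mul hd0
  have hk : (diagInvOne t⁻¹ * (u * g) * (diagInvOne t⁻¹)⁻¹).val =
      !![g.val.det / g 1 1, 0; (t⁻¹ : Fˣ) * g 1 0, g 1 1] := by
    rw [coe_diagInvOne_conj, hlower]
    simp
  refine ⟨u⁻¹, _, ?_, mem_iwahori_of_coe_eq hk ?_ hd ?_ hε, ?_⟩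
  · simp [hu]
  · rw [norm_div, hdet, hd, div_one]
  · rwa [Units.val_inv_eq_inv_val, norm_mul, norm_inv,
      inv_mul_le_iff₀ (norm_pos_iff.mpr t.ne_zero), mul_comm]
  · rw [map_inv]
    group

lemma norm_apply_one_zero_le_of_eq_mul {t : Fˣ} {b : GL (Fin 2) F} (hb : b 1 0 = 0)
    (hk : k ∈ iwahori F ε) (hg : g ∈ integralGL F)
    (h : g = b * diagInvOne t * k * (diagInvOne t)⁻¹) : ‖g 1 0‖ ≤ ε * ‖(t : F)‖ := by
  obtain ⟨-, -, hk11, hk10⟩ := hk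
  have hrow (j : Fin 2) : g 1 j = b 1 1 * (diagInvOne t * k * (diagInvOne t)⁻¹) 1 j := by
    rw [← mul_apply_one_of_apply_one_zero_eq_zero hb, h]
    simp only [mul_assoc]
  simp only [coe_diagInvOne_conj] at hrow
  have hb11 : ‖b 1 1‖ ≤ 1 := by
    simpa [hrow 1, hk11] using hg.1 1 1
  calc ‖g 1 0‖ = ‖b 1 1‖ * (‖k 1 0‖ * ‖(t : F)‖) := by simp [hrow 0, mul_comm]
    _ ≤ 1 * (ε * ‖(t : F)‖) := by gcongr
    _ = ε * ‖(t : F)‖ := one_mul _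

variable [IsUltrametricDist F]

lemma norm_diag_eq_one_of_norm_apply_one_zero_lt_one (hg : g ∈ integralGL F)
    (h : ‖g 1 0‖ < 1) : ‖g 0 0‖ = 1 ∧ ‖g 1 1‖ = 1 := by
  obtain ⟨hle, hdet⟩ := hg
  have hoff : ‖g 0 1 * g 1 0‖ < 1 := by
    rw [norm_mul]
    exact mul_lt_one_of_nonneg_of_lt_one_right (hle 0 1) (norm_nonneg _) h
  have hdiag : ‖g 0 0‖ * ‖g 1 1‖ = 1 := by
    rw [← norm_mul, ← sub_add_cancel (g 0 0 * g 1 1) (g 0 1 * g 1 0), ← det_fin_two,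
      IsUltrametricDist.norm_add_eq_max_of_norm_ne_norm (hdet ▸ hoff.ne'), hdet,
      max_eq_left hoff.le]
  constructor
  · exact (hle 0 0).antisymm (hdiag ▸ mul_le_of_le_one_right (norm_nonneg _) (hle 1 1))
  · exact (hle 1 1).antisymm (hdiag ▸ mul_le_of_le_one_left (norm_nonneg _) (hle 0 0))

theorem stmt7_general (t : Fˣ) (hε : ε ≤ 1) (hεt : ε * ‖(t : F)‖ < 1) :
    {g : GL (Fin 2) F | g ∈ integralGL F ∧
        ∃ b k : GL (Fin 2) F, b 1 0 = 0 ∧ k ∈ iwahori F ε ∧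
          g = b * diagInvOne t * k * (diagInvOne t)⁻¹} =
      iwahori F (ε * ‖(t : F)‖) := by
  ext g
  constructor
  · rintro ⟨hg, b, k, hb, hk, h⟩
    have hc : ‖g 1 0‖ ≤ ε * ‖(t : F)‖ := norm_apply_one_zero_le_of_eq_mul hb hk hg h
    obtain ⟨ha, hd⟩ := norm_diag_eq_one_of_norm_apply_one_zero_lt_one hg (hc.trans_lt hεt)
    exact ⟨hg, ha, hd, hc⟩
  · exact fun hg ↦ ⟨hg.1, exists_mem_iwahori_of_mem_iwahori_mul hε hg⟩

end Iwahori

lemma inI_iff_mem_iwahori {n : ℕ} (hn : 1 ≤ n) (g : GL (Fin 2) ℚ_[p]) :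
    inI p n g ↔ g ∈ iwahori ℚ_[p] ((p : ℝ) ^ (-(n : ℤ))) := by
  simp only [inI, Nat.one_le_iff_ne_zero.mp hn, false_or]
  rfl

lemma gamma_pow (r : ℕ) : gamma p ^ r = diagInvOne (pu p ^ r) := by
  have hgamma : gamma p = diagInvOne (pu p) := by
    ext1
    rw [coe_diagInvOne, Units.val_inv_eq_inv_val]
    rfl
  rw [hgamma, map_pow]

lemma zpow_neg_mul_norm_pu_pow (s r : ℕ) :
    (p : ℝ) ^ (-(s : ℤ)) * ‖(pu p ^ r : ℚ_[p]ˣ).val‖ = (p : ℝ) ^ (-((s + r : ℕ) : ℤ)) := by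
  have hp : (p : ℝ) ≠ 0 := by exact_mod_cast (Fact.out : p.Prime).ne_zero
  rw [Units.val_pow_eq_pow_val, pu, Units.val_mk0, Padic.norm_p_pow, ← zpow_add₀ hp,
    Nat.cast_add, neg_add]

lemma zpow_neg_natCast_lt_one {n : ℕ} (hn : 1 ≤ n) : (p : ℝ) ^ (-(n : ℤ)) < 1 :=
  zpow_lt_one_of_neg₀ (by exact_mod_cast (Fact.out : p.Prime).one_lt) (by lia)

/-- Equation «intersection»: `K ∩ B γ^r I_s γ^{-r} = I_{s+r}` for `s ≥ 1`. -/
theorem stmt7 (s r : ℕ) (hs : 1 ≤ s) :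
    {g : GL (Fin 2) ℚ_[p] | inK p g ∧
        ∃ b k : GL (Fin 2) ℚ_[p], mat p b 1 0 = 0 ∧ inI p s k ∧
          g = b * gamma p ^ r * k * (gamma p)⁻¹ ^ r} =
      {g : GL (Fin 2) ℚ_[p] | inI p (s + r) g} := by
  have hsr : 1 ≤ s + r := by lia
  simp only [inI_iff_mem_iwahori p hs, inI_iff_mem_iwahori p hsr, inv_pow, gamma_pow,
    ← zpow_neg_mul_norm_pu_pow]
  exact stmt7_general (pu p ^ r) (zpow_neg_natCast_lt_one p hs).le
    (zpow_neg_mul_norm_pu_pow p s r ▸ zpow_neg_natCast_lt_one p hsr)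
end
end

section
/- K is the disjoint union of I and (B ∩ K) * w * I; that is, K \ I = {b * w * i : b in B ∩ K, i in I}, and this set is disjoint from I. -/
open Matrix

noncomputable section

variable (p : ℕ) [Fact p.Prime]

/-- The Weyl element `w = [[0,1],[1,0]]` of `GL₂(ℚ_p)`. -/
def wEl : GL (Fin 2) ℚ_[p] :=
  Matrix.GeneralLinearGroup.mkOfDetNeZero !![(0 : ℚ_[p]), 1; 1, 0] (by
    simp [Matrix.det_fin_two_of])

/-! Over a local ring `R`, such as `ℤ_p`, let `I` be the preimage in `GL₂(R)` of the Borel subgroup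
of the residue field, so that `g ∉ I` exactly when the lower left entry of `g` is a unit. Such a `g`
lies in the big cell `B w U`, with `U` the upper unipotent matrices, as one column operation clears
its lower right entry. Conversely, `B ≤ I`, so an element of `B w I` lying in `I` would force
`w ∈ I`, which is absurd. -/

open DoubleCoset IsLocalRing
open scoped Pointwise

section CommRing

variable {R S n : Type*} [CommRing R] [CommRing S] [Fintype n] [DecidableEq n]

theorem mem_range_generalLinearGroupMap_iff {f : R →+* S} (hf : Function.Injective f) {g : GL n S} :
    g ∈ (GeneralLinearGroup.map f : GL n R →* GL n S).range ↔
      (∀ i j, g i j ∈ f.range) ∧ g.det ∈ (Units.map (f : R →* S)).range := by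
  constructor
  · rintro ⟨h, rfl⟩
    exact ⟨fun i j ↦ ⟨h i j, rfl⟩, h.det, (GeneralLinearGroup.map_det f h).symm⟩
  · rintro ⟨hentries, u, hu⟩
    choose A hA using hentries
    have hmap : f.mapMatrix (of A) = g := Matrix.ext hA
    have hdet : (of A).det = u := hf <| by
      rw [RingHom.map_det, hmap]
      exact (congrArg Units.val hu).symm
    exact ⟨GeneralLinearGroup.mk'' (of A) (hdet ▸ u.isUnit), Units.ext hmap⟩

variable (R) in
/-- The Borel subgroup of upper triangular matrices in `GL₂(R)`. -/
def borelSubgroup : Subgroup (GL (Fin 2) R) where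
  carrier := {g | g 1 0 = 0}
  one_mem' := by simp
  mul_mem' {g h} (hg : g 1 0 = 0) (hh : h 1 0 = 0) := by
    simp [Matrix.mul_apply, hg, hh]
  inv_mem' {g} (hg : g 1 0 = 0) := by
    simp [Matrix.inv_def, adjugate_fin_two, hg]

theorem mem_borelSubgroup_iff {g : GL (Fin 2) R} : g ∈ borelSubgroup R ↔ g 1 0 = 0 := Iff.rfl

theorem isUnit_diag_of_mem_borelSubgroup {g : GL (Fin 2) R} (hg : g ∈ borelSubgroup R) :
    IsUnit (g 0 0) ∧ IsUnit (g 1 1) := by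
  have hdet : g.val.det = g 0 0 * g 1 1 := by
    rw [det_fin_two, mem_borelSubgroup_iff.1 hg, mul_zero, sub_zero]
  exact IsUnit.mul_iff.1 (hdet ▸ g.det.isUnit)

theorem exists_eq_mul_swap_mul_upperRightHom {g : GL (Fin 2) R} (hg : IsUnit (g 1 0)) :
    ∃ b ∈ borelSubgroup R, ∃ x : R,
      g = b * GeneralLinearGroup.swap R 0 1 * GeneralLinearGroup.upperRightHom x := by
  obtain ⟨c, hc⟩ := hg
  let x : R := ↑c⁻¹ * g 1 1
  refine ⟨g * GeneralLinearGroup.upperRightHom (-x) * (GeneralLinearGroup.swap R 0 1)⁻¹, ?_, x, ?_⟩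
  · have hx : g 1 0 * x = g 1 1 := by rw [← hc, Units.mul_inv_cancel_left]
    simp [mem_borelSubgroup_iff, GeneralLinearGroup.swap, Matrix.swap, Matrix.mul_apply, hx]
  · rw [AddChar.map_neg_eq_inv, inv_mul_cancel_right, inv_mul_cancel_right]

end CommRing

section IsLocalRing

variable {R : Type*} [CommRing R] [IsLocalRing R]

variable (R) in
/-- The Iwahori subgroup of `GL₂(R)` for a local ring `R`: the matrices that become upper triangular
over the residue field. For `R = ℤ_p` its image in `GL₂(ℚ_p)` is `I = I_1`. -/
def iwahoriSubgroup : Subgroup (GL (Fin 2) R) :=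
  (borelSubgroup (ResidueField R)).comap (GeneralLinearGroup.map (residue R))

theorem mem_iwahoriSubgroup_iff {g : GL (Fin 2) R} :
    g ∈ iwahoriSubgroup R ↔ ¬ IsUnit (g 1 0) :=
  residue_eq_zero_iff (g 1 0)

theorem borelSubgroup_le_iwahoriSubgroup : borelSubgroup R ≤ iwahoriSubgroup R := fun _ hg ↦
  mem_iwahoriSubgroup_iff.2 <| mem_borelSubgroup_iff.1 hg ▸ not_isUnit_zero

theorem isUnit_diag_of_mem_iwahoriSubgroup {g : GL (Fin 2) R} (hg : g ∈ iwahoriSubgroup R) :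
    IsUnit (g 0 0) ∧ IsUnit (g 1 1) :=
  (isUnit_diag_of_mem_borelSubgroup hg).imp (isUnit_of_map_unit (residue R) _)
    (isUnit_of_map_unit (residue R) _)

theorem upperRightHom_mem_iwahoriSubgroup (x : R) :
    GeneralLinearGroup.upperRightHom x ∈ iwahoriSubgroup R :=
  borelSubgroup_le_iwahoriSubgroup <| by simp [mem_borelSubgroup_iff]

theorem swap_notMem_iwahoriSubgroup :
    GeneralLinearGroup.swap R (0 : Fin 2) 1 ∉ iwahoriSubgroup R := by
  simp [mem_iwahoriSubgroup_iff, GeneralLinearGroup.swap, Matrix.swap]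

theorem stmt10_general (R : Type*) [CommRing R] [IsLocalRing R] :
    doubleCoset (GeneralLinearGroup.swap R (0 : Fin 2) 1) (borelSubgroup R) (iwahoriSubgroup R) =
      (iwahoriSubgroup R : Set (GL (Fin 2) R))ᶜ := by
  ext g
  rw [mem_doubleCoset, Set.mem_compl_iff, SetLike.mem_coe]
  constructor
  · rintro ⟨b, hb, i, hi, rfl⟩ hmem
    have hb' : b ∈ iwahoriSubgroup R := borelSubgroup_le_iwahoriSubgroup hb
    rw [Subgroup.mul_mem_cancel_right _ hi, Subgroup.mul_mem_cancel_left _ hb'] at hmem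
    exact swap_notMem_iwahoriSubgroup hmem
  · intro hg
    obtain ⟨b, hb, x, rfl⟩ :=
      exists_eq_mul_swap_mul_upperRightHom (not_not.1 (mem_iwahoriSubgroup_iff.not.1 hg))
    exact ⟨b, hb, GeneralLinearGroup.upperRightHom x, upperRightHom_mem_iwahoriSubgroup x, rfl⟩

end IsLocalRing

section Padic

/-- The inclusion of `GL₂(ℤ_p)` into `GL₂(ℚ_p)`, whose range is `K`. -/
def integralInclusion : GL (Fin 2) ℤ_[p] →* GL (Fin 2) ℚ_[p] :=
  GeneralLinearGroup.map (algebraMap ℤ_[p] ℚ_[p])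

theorem integralInclusion_injective : Function.Injective (integralInclusion p) :=
  Units.map_injective (Matrix.map_injective (FaithfulSMul.algebraMap_injective _ _))

theorem integralInclusion_swap :
    integralInclusion p (GeneralLinearGroup.swap ℤ_[p] 0 1) = wEl p := by
  ext i j
  fin_cases i <;> fin_cases j <;>
    simp [integralInclusion, wEl, GeneralLinearGroup.mkOfDetNeZero, Matrix.swap]

theorem inK_iff_mem_range {g : GL (Fin 2) ℚ_[p]} : inK p g ↔ g ∈ (integralInclusion p).range := by
  have norm_le_one_iff (x : ℚ_[p]) : ‖x‖ ≤ 1 ↔ x ∈ (algebraMap ℤ_[p] ℚ_[p]).range :=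
    ⟨fun hx ↦ ⟨⟨x, hx⟩, rfl⟩, fun ⟨y, hy⟩ ↦ hy ▸ y.norm_le_one⟩
  have norm_eq_one_iff (x : ℚ_[p]ˣ) : ‖(x : ℚ_[p])‖ = 1 ↔
      x ∈ (Units.map (algebraMap ℤ_[p] ℚ_[p] : ℤ_[p] →* ℚ_[p])).range :=
    ⟨fun hx ↦ ⟨PadicInt.mkUnits hx, Units.ext rfl⟩, fun ⟨u, hu⟩ ↦ hu ▸ PadicInt.norm_units u⟩
  exact (and_congr (forall₂_congr fun _ _ ↦ norm_le_one_iff _) (norm_eq_one_iff g.det)).trans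
    (mem_range_generalLinearGroupMap_iff (FaithfulSMul.algebraMap_injective _ _)).symm

theorem inI_one_integralInclusion_iff {h : GL (Fin 2) ℤ_[p]} :
    inI p 1 (integralInclusion p h) ↔ h ∈ iwahoriSubgroup ℤ_[p] := by
  have hlower : ‖h 1 0‖ ≤ (p : ℝ) ^ (-((1 : ℕ) : ℤ)) ↔ h ∈ iwahoriSubgroup ℤ_[p] := by
    rw [mem_iwahoriSubgroup_iff, PadicInt.not_isUnit_iff,
      PadicInt.norm_le_pow_iff_norm_lt_pow_add_one]
    simp
  constructor
  · rintro ⟨-, h10 | ⟨-, -, hle⟩⟩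
    · exact absurd h10 one_ne_zero
    · exact hlower.1 hle
  · intro hh
    obtain ⟨h00, h11⟩ := isUnit_diag_of_mem_iwahoriSubgroup hh
    exact ⟨(inK_iff_mem_range p).2 ⟨h, rfl⟩,
      .inr ⟨PadicInt.isUnit_iff.1 h00, PadicInt.isUnit_iff.1 h11, hlower.2 hh⟩⟩

theorem setOf_inI_one : {g | inI p 1 g} = integralInclusion p '' iwahoriSubgroup ℤ_[p] := by
  ext g
  constructor
  · intro hg
    obtain ⟨h, rfl⟩ := (inK_iff_mem_range p).1 hg.1
    exact ⟨h, (inI_one_integralInclusion_iff p).1 hg, rfl⟩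
  · rintro ⟨h, hh, rfl⟩
    exact (inI_one_integralInclusion_iff p).2 hh

theorem setOf_inK_and_not_inI_one :
    {g | inK p g ∧ ¬ inI p 1 g} =
      integralInclusion p '' (iwahoriSubgroup ℤ_[p] : Set (GL (Fin 2) ℤ_[p]))ᶜ := by
  have hK : {g | inK p g} = Set.range (integralInclusion p) :=
    Set.ext fun _ ↦ inK_iff_mem_range p
  rw [Set.image_compl_eq_range_sdiff_image (integralInclusion_injective p), ← hK, ← setOf_inI_one]
  rfl

theorem setOf_upperTriangular_and_inK :
    {g | mat p g 1 0 = 0 ∧ inK p g} = integralInclusion p '' borelSubgroup ℤ_[p] := by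
  ext g
  constructor
  · rintro ⟨hg, hK⟩
    obtain ⟨h, rfl⟩ := (inK_iff_mem_range p).1 hK
    exact ⟨h, PadicInt.coe_eq_zero.1 hg, rfl⟩
  · rintro ⟨h, hh, rfl⟩
    exact ⟨PadicInt.coe_eq_zero.2 hh, (inK_iff_mem_range p).2 ⟨h, rfl⟩⟩

theorem setOf_exists_mul_wEl_mul :
    {k | ∃ b i, (mat p b 1 0 = 0 ∧ inK p b) ∧ inI p 1 i ∧ k = b * wEl p * i} =
      integralInclusion p '' doubleCoset (GeneralLinearGroup.swap ℤ_[p] 0 1)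
        (borelSubgroup ℤ_[p]) (iwahoriSubgroup ℤ_[p]) := by
  rw [doubleCoset, Set.image_mul, Set.image_mul, Set.image_singleton, integralInclusion_swap,
    ← setOf_inI_one, ← setOf_upperTriangular_and_inK, ← doubleCoset]
  ext k
  simp [mem_doubleCoset]

end Padic

/-- `K` is the disjoint union of `I` and `(B ∩ K) w I`: the set
`{b * w * i : b ∈ B ∩ K, i ∈ I}` equals `K \ I` and is disjoint from `I`. -/
theorem stmt10 :
    ({k : GL (Fin 2) ℚ_[p] | inK p k ∧ ¬ inI p 1 k} =
      {k : GL (Fin 2) ℚ_[p] |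
        ∃ b i : GL (Fin 2) ℚ_[p], (mat p b 1 0 = 0 ∧ inK p b) ∧ inI p 1 i ∧
          k = b * wEl p * i}) ∧
    Disjoint
      {k : GL (Fin 2) ℚ_[p] |
        ∃ b i : GL (Fin 2) ℚ_[p], (mat p b 1 0 = 0 ∧ inK p b) ∧ inI p 1 i ∧
          k = b * wEl p * i}
      {k : GL (Fin 2) ℚ_[p] | inI p 1 k} := by
  rw [setOf_inK_and_not_inI_one, setOf_exists_mul_wEl_mul, setOf_inI_one, stmt10_general]
  exact ⟨rfl, (Set.disjoint_image_iff (integralInclusion_injective p)).2 disjoint_compl_left⟩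
end
end
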